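/- Fix a real number t with 0 < t < 1. Given an admissible labeling (a,b,e;c,d,f) of the edges of a tetrahedron, the sequence k ↦ t^{−4k}·{a+2k, b+2k, e+2k; c+2k, d+2k, f+2k}_u of scaled unitary 6j-symbols converges as k → ∞. -/

import Mathlib

open Filter Finset

/-- A triple of nonnegative integers is admissible if its sum is even and
it satisfies every triangle inequality. -/
def Admissible (a b c : ℕ) : Prop :=
  Even (a + b + c) ∧ a ≤ b + c ∧ b ≤ a + c ∧ c ≤ a + b

/-- A labeling (a,b,e;c,d,f) of the edges of a tetrahedron is admissible if the
four vertex triples (a,d,e), (b,c,e), (a,b,f), (c,d,f) are admissible. -/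
def TetAdmissible (a b e c d f : ℕ) : Prop :=
  Admissible a d e ∧ Admissible b c e ∧ Admissible a b f ∧ Admissible c d f

/-- The quantized integer `[n] = (t^{2n} - t^{-2n})/(t^2 - t^{-2})`. -/
noncomputable def qint (t : ℝ) (n : ℕ) : ℝ :=
  (t ^ (2 * n) - (t ^ (2 * n))⁻¹) / (t ^ 2 - (t ^ 2)⁻¹)

/-- The quantized factorial `[n]! = [n]·[n-1]!`, `[0]! = 1`. -/
noncomputable def qfact (t : ℝ) : ℕ → ℝ
  | 0 => 1
  | n + 1 => qint t (n + 1) * qfact t n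

/-- `θ(a,b,c)` for an admissible triple. -/
noncomputable def qtheta (t : ℝ) (a b c : ℕ) : ℝ :=
  (-1 : ℝ) ^ ((a + b + c) / 2) *
    (qfact t ((a + b + c) / 2 + 1) * qfact t ((a + b - c) / 2) *
      qfact t ((a + c - b) / 2) * qfact t ((b + c - a) / 2)) /
    (qfact t a * qfact t b * qfact t c)

/-- Product of the quantized factorials of the strand numbers of a triple. -/
noncomputable def strandProd (t : ℝ) (a b c : ℕ) : ℝ :=
  qfact t ((a + b - c) / 2) * qfact t ((b + c - a) / 2) * qfact t ((a + c - b) / 2)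

/-- The tetrahedral coefficient `Tet(a,b,e;c,d,f)`. -/
noncomputable def Tet (t : ℝ) (a b e c d f : ℕ) : ℝ :=
  (strandProd t a d e * strandProd t b c e * strandProd t a b f * strandProd t c d f) /
      (qfact t a * qfact t b * qfact t c * qfact t d * qfact t e * qfact t f) *
    ∑ s ∈ Finset.Icc
        (max ((a + d + e) / 2) (max ((b + c + e) / 2) (max ((a + b + f) / 2) ((c + d + f) / 2))))
        (min ((a + b + c + d) / 2) (min ((a + c + e + f) / 2) ((b + d + e + f) / 2))),
      ((-1 : ℝ) ^ s * qfact t (s + 1)) /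
        (qfact t ((a + b + c + d) / 2 - s) * qfact t ((a + c + e + f) / 2 - s) *
          qfact t ((b + d + e + f) / 2 - s) *
          qfact t (s - (a + d + e) / 2) * qfact t (s - (b + c + e) / 2) *
          qfact t (s - (a + b + f) / 2) * qfact t (s - (c + d + f) / 2))

/-- The unitary 6j-symbol `{a,b,e;c,d,f}_u`. -/
noncomputable def sixj (t : ℝ) (a b e c d f : ℕ) : ℝ :=
  Tet t a b e c d f /
    Real.sqrt (qtheta t a d e * qtheta t b c e * qtheta t a b f * qtheta t c d f)

/-- The q-Pochhammer symbol `(x;q)_n`. -/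
noncomputable def qPoch (x q : ℝ) (n : ℕ) : ℝ := ∏ i ∈ Finset.range n, (1 - x * q ^ i)

/-- The infinite q-Pochhammer symbol `(x;q)_∞`. -/
noncomputable def qPochInf (x q : ℝ) : ℝ := ∏' i : ℕ, (1 - x * q ^ i)

/-!
Put `q = t ^ 4`. Up to a power of `t` and of `1 - q`, the quantized factorial `[n]!` is the
Pochhammer symbol `(q;q)_n`, and in Racah's formula these powers collapse, because the half-sums
satisfy `∑ A j = ∑ B i`: with `D i = B i - s`, the summand of index `s` of the unitary 6j-symbol is
`(-1)^s (1 - q) t^(s + ∑ D i + 2 (D 0 D 1 + D 0 D 2 + D 1 D 2))` times the same expression in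
Pochhammer symbols, which stays bounded. Under the scaling the differences
`B i - M` to the upper end `M` of the summation range do not change, while `M` grows by `4k`.
So the sum read from its upper end, `s = M - j`, becomes a series in `j` once the common factor
`t^(4k)` is removed, with terms that converge and are `O(t^j)` uniformly in `k`; Tannery's theorem
concludes.
-/

theorem tendsto_sum_range_of_dominated {G : Type*} [NormedAddCommGroup G] [CompleteSpace G]
    {f : ℕ → ℕ → G} {g : ℕ → G} {bound : ℕ → ℝ} {N : ℕ → ℕ} (hN : Tendsto N atTop atTop)
    (hbound : Summable bound) (hlim : ∀ j, Tendsto (f · j) atTop (nhds (g j)))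
    (hf : ∀ k, ∀ j < N k, ‖f k j‖ ≤ bound j) :
    Tendsto (fun k => ∑ j ∈ range (N k), f k j) atTop (nhds (∑' j, g j)) := by
  have hbound_nonneg (j : ℕ) : 0 ≤ bound j := by
    obtain ⟨k, hk⟩ := (hN.eventually_gt_atTop j).exists
    exact (norm_nonneg _).trans (hf k j hk)
  refine Tendsto.congr (fun k => (sum_eq_tsum_indicator (f k) (range (N k))).symm) ?_
  refine tendsto_tsum_of_dominated_convergence hbound (fun j => (hlim j).congr' ?_)
    (Eventually.of_forall fun k j => ?_)
  · filter_upwards [hN.eventually_gt_atTop j] with k hk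
    exact (Set.indicator_of_mem (by simpa using hk) _).symm
  · by_cases hj : j < N k
    · simpa [hj] using hf k j hj
    · simpa [hj] using hbound_nonneg j

theorem sum_Icc_eq_sum_range_sub {R : Type*} [AddCommMonoid R] (f : ℕ → R) {m M : ℕ}
    (hmM : m ≤ M) : ∑ s ∈ Icc m M, f s = ∑ j ∈ range (M - m + 1), f (M - j) := by
  rw [range_eq_Ico, sum_Ico_reflect f 0 (by omega)]
  exact sum_congr (by ext; simp only [mem_Icc, mem_Ico]; omega) fun _ _ => rfl

section Pochhammer

variable {x q : ℝ}

theorem qPoch_succ (x q : ℝ) (n : ℕ) : qPoch x q (n + 1) = qPoch x q n * (1 - x * q ^ n) :=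
  prod_range_succ _ _

theorem one_sub_mul_pow_pos (hx : x < 1) (hq0 : 0 ≤ q) (hq1 : q ≤ 1) (i : ℕ) :
    0 < 1 - x * q ^ i := by
  have hpow_nonneg : 0 ≤ q ^ i := pow_nonneg hq0 i
  have hpow_le_one : q ^ i ≤ 1 := pow_le_one₀ hq0 hq1
  rcases hpow_nonneg.eq_or_lt with hpow | hpow
  · simp [← hpow]
  · nlinarith

theorem qPoch_pos (hx : x < 1) (hq0 : 0 ≤ q) (hq1 : q ≤ 1) (n : ℕ) : 0 < qPoch x q n :=
  prod_pos fun i _ => one_sub_mul_pow_pos hx hq0 hq1 i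

theorem antitone_qPoch (hx0 : 0 ≤ x) (hx1 : x < 1) (hq0 : 0 ≤ q) (hq1 : q ≤ 1) :
    Antitone (qPoch x q) := by
  refine antitone_nat_of_succ_le fun n => ?_
  rw [qPoch_succ]
  exact mul_le_of_le_one_right (qPoch_pos hx1 hq0 hq1 n).le (sub_le_self _ (by positivity))

theorem qPoch_le_one (hx0 : 0 ≤ x) (hx1 : x < 1) (hq0 : 0 ≤ q) (hq1 : q ≤ 1) (n : ℕ) :
    qPoch x q n ≤ 1 :=
  (antitone_qPoch hx0 hx1 hq0 hq1 n.zero_le).trans_eq (prod_range_zero _)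

theorem summable_norm_neg_mul_pow (x : ℝ) (hq : |q| < 1) :
    Summable fun i : ℕ => ‖-(x * q ^ i)‖ := by
  simpa only [norm_neg, norm_mul, norm_pow] using (summable_geometric_of_abs_lt_one
    (by rwa [Real.norm_eq_abs, abs_abs])).mul_left ‖x‖

theorem tendsto_qPoch (x : ℝ) (hq : |q| < 1) :
    Tendsto (qPoch x q) atTop (nhds (qPochInf x q)) := by
  simpa only [← sub_eq_add_neg, qPochInf] using!
    (multipliable_one_add_of_summable (summable_norm_neg_mul_pow x hq)).tendsto_prod_tprod_nat

theorem qPochInf_pos (hx : x < 1) (hq0 : 0 ≤ q) (hq1 : q < 1) : 0 < qPochInf x q := by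
  have hq : |q| < 1 := by rwa [abs_of_nonneg hq0]
  have hne : qPochInf x q ≠ 0 := by
    simpa only [← sub_eq_add_neg, qPochInf] using tprod_one_add_ne_zero_of_summable
      (f := fun i : ℕ => -(x * q ^ i))
      (fun i => (one_sub_mul_pow_pos hx hq0 hq1.le i).ne') (summable_norm_neg_mul_pow x hq)
  exact (ge_of_tendsto' (tendsto_qPoch x hq) fun n => (qPoch_pos hx hq0 hq1.le n).le).lt_of_ne'
    hne

theorem qPochInf_le_qPoch (hx0 : 0 ≤ x) (hx1 : x < 1) (hq0 : 0 ≤ q) (hq1 : q < 1) (n : ℕ) :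
    qPochInf x q ≤ qPoch x q n :=
  (antitone_qPoch hx0 hx1 hq0 hq1.le).le_of_tendsto
    (tendsto_qPoch x (by rwa [abs_of_nonneg hq0])) n

end Pochhammer

/-- The weight `exp (w n (n - 1) + β n)`, the general form of the elementary factor of `[n]!`. An
exponential, rather than a product of integer powers, turns identities between products of such
weights into linear identities between exponents. -/
noncomputable def gaussianWeight (w β : ℝ) (n : ℕ) : ℝ :=
  Real.exp (w * (n * (n - 1)) + β * n)

theorem gaussianWeight_pos (w β : ℝ) (n : ℕ) : 0 < gaussianWeight w β n :=
  Real.exp_pos _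

theorem gaussianWeight_succ (w β : ℝ) (n : ℕ) :
    gaussianWeight w β (n + 1) = Real.exp (2 * w * n + β) * gaussianWeight w β n := by
  rw [gaussianWeight, gaussianWeight, ← Real.exp_add]
  congr 1
  push_cast
  ring

section QFactorial

variable {t : ℝ}

theorem qint_succ (ht0 : t ≠ 0) (ht1 : t ^ 4 ≠ 1) (n : ℕ) :
    qint t (n + 1) = (1 - t ^ 4 * (t ^ 4) ^ n) * ((t ^ (2 * n))⁻¹ * (1 - t ^ 4)⁻¹) := by
  have hq : 1 - t ^ 4 ≠ 0 := sub_ne_zero.2 ht1.symm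
  have hden : t ^ 2 - (t ^ 2)⁻¹ = -((1 - t ^ 4) * (t ^ 2)⁻¹) := by
    field_simp
    ring
  rw [qint, hden]
  field_simp
  ring

theorem qfact_eq_qPoch_mul_gaussianWeight (ht0 : 0 < t) (ht1 : t < 1) :
    qfact t = qPoch (t ^ 4) (t ^ 4) *
      gaussianWeight (-Real.log t) (-Real.log (1 - t ^ 4)) := by
  have hq : t ^ 4 < 1 := pow_lt_one₀ ht0.le ht1 four_ne_zero
  funext n
  rw [Pi.mul_apply]
  induction n with
  | zero => simp [qfact, qPoch, gaussianWeight]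
  | succ n ih =>
    have hexp : Real.exp (2 * -Real.log t * n + -Real.log (1 - t ^ 4)) =
        (t ^ (2 * n))⁻¹ * (1 - t ^ 4)⁻¹ := by
      rw [Real.exp_add, Real.exp_neg (Real.log (1 - t ^ 4)), Real.exp_log (sub_pos.2 hq),
        show 2 * -Real.log t * n = -((2 * n : ℕ) * Real.log t) by push_cast; ring,
        Real.exp_neg, Real.exp_nat_mul, Real.exp_log ht0]
    rw [qfact, qint_succ ht0.ne' hq.ne, ih, qPoch_succ, gaussianWeight_succ, hexp]
    ring

theorem qfact_pos (ht0 : 0 < t) (ht1 : t < 1) (n : ℕ) : 0 < qfact t n := by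
  have hq : t ^ 4 < 1 := pow_lt_one₀ ht0.le ht1 four_ne_zero
  rw [qfact_eq_qPoch_mul_gaussianWeight ht0 ht1]
  exact mul_pos (qPoch_pos hq (by positivity) hq.le n) (gaussianWeight_pos _ _ n)

end QFactorial

section Racah

/-- The absolute value of a summand of Racah's formula for the unitary 6j-symbol, with the factor
outside the sum included, for a sequence `F` in place of the quantized factorials. Here `A` stands
for the half-sums at the four vertices and `B` for those along the three quadrilaterals; the
subtractions are meant for `A j ≤ s ≤ B i`. -/
noncomputable def racahSummand (F : ℕ → ℝ) (A : Fin 4 → ℕ) (B : Fin 3 → ℕ) (s : ℕ) : ℝ :=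
  √((∏ i, ∏ j, F (B i - A j)) / ∏ j, F (A j + 1)) *
    (F (s + 1) / ((∏ i, F (B i - s)) * ∏ j, F (s - A j)))

/-- The right-hand side of Racah's formula for the unitary 6j-symbol, for a sequence `F` in place of
the quantized factorials. -/
noncomputable def racahSum (F : ℕ → ℝ) (A : Fin 4 → ℕ) (B : Fin 3 → ℕ) : ℝ :=
  ∑ s ∈ Icc (univ.sup' univ_nonempty A) (univ.inf' univ_nonempty B),
    (-1) ^ s * racahSummand F A B s

/-- The exponent of `t` in the summand of index `s = M - j` of Racah's formula; it is
`s + ∑ D i + 2 (D 0 D 1 + D 0 D 2 + D 1 D 2)` for `D i = B i - s`. -/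
def racahExponent (B : Fin 3 → ℕ) (M j : ℕ) : ℕ :=
  M + 2 * j + ∑ i, (B i - M) + 2 * ((B 0 - M + j) * (B 1 - M + j) +
    (B 0 - M + j) * (B 2 - M + j) + (B 1 - M + j) * (B 2 - M + j))

variable {A : Fin 4 → ℕ} {B : Fin 3 → ℕ}

theorem racahExponent_add_mul (B : Fin 3 → ℕ) (M j k : ℕ) :
    racahExponent (fun i => B i + 4 * k) (M + 4 * k) j = 4 * k + racahExponent B M j := by
  simp only [racahExponent, Nat.add_sub_add_right]
  ring

theorem le_racahExponent (B : Fin 3 → ℕ) (M j : ℕ) : j ≤ racahExponent B M j := by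
  unfold racahExponent
  omega

theorem racahSummand_mul (F : ℕ → ℝ) {G : ℕ → ℝ} (hG : ∀ n, 0 ≤ G n) (A : Fin 4 → ℕ)
    (B : Fin 3 → ℕ) (s : ℕ) :
    racahSummand (F * G) A B s = racahSummand F A B s * racahSummand G A B s := by
  have hratio : 0 ≤ (∏ i, ∏ j, G (B i - A j)) / ∏ j, G (A j + 1) :=
    div_nonneg (prod_nonneg fun _ _ => prod_nonneg fun _ _ => hG _) (prod_nonneg fun _ _ => hG _)
  simp only [racahSummand, Pi.mul_apply, prod_mul_distrib]
  rw [mul_div_mul_comm, Real.sqrt_mul' _ hratio]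
  ring

theorem racahSummand_gaussianWeight (w β : ℝ) (hAB : ∑ j, A j = ∑ i, B i) {M j : ℕ}
    (hA : ∀ l, A l + j ≤ M) (hB : ∀ i, M ≤ B i) :
    racahSummand (gaussianWeight w β) A B (M - j) =
      Real.exp (-(w * racahExponent B M j + β)) := by
  have hsum : ∑ l, (A l : ℝ) = ∑ i, (B i : ℝ) := by exact_mod_cast hAB
  have hjM : j ≤ M := (Nat.le_add_left _ _).trans (hA 0)
  have hBA (i : Fin 3) (l : Fin 4) : ((B i - A l : ℕ) : ℝ) = B i - A l :=
    Nat.cast_sub (((Nat.le_add_right _ _).trans (hA l)).trans (hB i))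
  have hBM (i : Fin 3) : ((B i - M : ℕ) : ℝ) = B i - M := Nat.cast_sub (hB i)
  have hBs (i : Fin 3) : ((B i - (M - j) : ℕ) : ℝ) = B i - (M - j) := by
    rw [Nat.cast_sub ((Nat.sub_le _ _).trans (hB i)), Nat.cast_sub hjM]
  have hsA (l : Fin 4) : ((M - j - A l : ℕ) : ℝ) = M - j - A l := by
    rw [Nat.cast_sub (Nat.le_sub_of_add_le (hA l)), Nat.cast_sub hjM]
  simp only [racahSummand, gaussianWeight, racahExponent, ← Real.exp_sum, ← Real.exp_sub,
    ← Real.exp_half, ← Real.exp_add]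
  congr 1
  push_cast [hBA, hBM, hBs, hsA, Nat.cast_sub hjM]
  simp only [Fin.sum_univ_three, Fin.sum_univ_four] at hsum ⊢
  linear_combination (w * (2 * (M - j) - (B 0 + B 1 + B 2)) - β) * hsum

theorem racahSummand_qfact {t : ℝ} (ht0 : 0 < t) (ht1 : t < 1) (hAB : ∑ j, A j = ∑ i, B i)
    {M j : ℕ} (hA : ∀ l, A l + j ≤ M) (hB : ∀ i, M ≤ B i) :
    racahSummand (qfact t) A B (M - j) = (1 - t ^ 4) * t ^ racahExponent B M j *
      racahSummand (qPoch (t ^ 4) (t ^ 4)) A B (M - j) := by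
  have hq : t ^ 4 < 1 := pow_lt_one₀ ht0.le ht1 four_ne_zero
  have hexp : Real.exp (-(-Real.log t * racahExponent B M j + -Real.log (1 - t ^ 4))) =
      (1 - t ^ 4) * t ^ racahExponent B M j := by
    rw [show -(-Real.log t * racahExponent B M j + -Real.log (1 - t ^ 4)) =
        Real.log (1 - t ^ 4) + racahExponent B M j * Real.log t by ring,
      Real.exp_add, Real.exp_nat_mul, Real.exp_log ht0, Real.exp_log (sub_pos.2 hq)]
  rw [qfact_eq_qPoch_mul_gaussianWeight ht0 ht1,
    racahSummand_mul _ (fun n => (gaussianWeight_pos _ _ n).le),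
    racahSummand_gaussianWeight _ _ hAB hA hB, hexp, mul_comm]

theorem racahSummand_nonneg {F : ℕ → ℝ} (hF : ∀ n, 0 ≤ F n) (A : Fin 4 → ℕ) (B : Fin 3 → ℕ)
    (s : ℕ) : 0 ≤ racahSummand F A B s :=
  mul_nonneg (Real.sqrt_nonneg _) (div_nonneg (hF _)
    (mul_nonneg (prod_nonneg fun _ _ => hF _) (prod_nonneg fun _ _ => hF _)))

theorem racahSummand_le {F : ℕ → ℝ} {L : ℝ} (hL : 0 < L) (hLF : ∀ n, L ≤ F n)
    (hF1 : ∀ n, F n ≤ 1) (A : Fin 4 → ℕ) (B : Fin 3 → ℕ) (s : ℕ) :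
    racahSummand F A B s ≤ (L ^ 9)⁻¹ := by
  have hF0 (n : ℕ) : 0 ≤ F n := hL.le.trans (hLF n)
  have pow_le_prod {n : ℕ} (x : Fin n → ℕ) : L ^ n ≤ ∏ i, F (x i) := by
    simpa using prod_le_prod (s := univ) (fun _ _ => hL.le) fun i _ => hLF (x i)
  have hsqrt : √((∏ i, ∏ j, F (B i - A j)) / ∏ j, F (A j + 1)) ≤ (L ^ 2)⁻¹ := by
    refine Real.sqrt_le_iff.2 ⟨by positivity, ?_⟩
    calc (∏ i, ∏ j, F (B i - A j)) / ∏ j, F (A j + 1)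
        ≤ 1 / L ^ 4 := div_le_div₀ zero_le_one
          (prod_le_one (fun _ _ => prod_nonneg fun _ _ => hF0 _)
            fun _ _ => prod_le_one (fun _ _ => hF0 _) fun _ _ => hF1 _)
          (by positivity) (pow_le_prod fun j => A j + 1)
      _ = ((L ^ 2)⁻¹) ^ 2 := by ring
  have hterm : F (s + 1) / ((∏ i, F (B i - s)) * ∏ j, F (s - A j)) ≤ (L ^ 7)⁻¹ :=
    calc F (s + 1) / ((∏ i, F (B i - s)) * ∏ j, F (s - A j))
        ≤ 1 / (L ^ 3 * L ^ 4) := div_le_div₀ zero_le_one (hF1 _) (by positivity)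
          (mul_le_mul (pow_le_prod fun i => B i - s) (pow_le_prod fun j => s - A j)
            (by positivity) (prod_nonneg fun _ _ => hF0 _))
      _ = (L ^ 7)⁻¹ := by rw [← pow_add, one_div]
  calc racahSummand F A B s ≤ (L ^ 2)⁻¹ * (L ^ 7)⁻¹ :=
        mul_le_mul hsqrt hterm (div_nonneg (hF0 _) (mul_nonneg (prod_nonneg fun _ _ => hF0 _)
          (prod_nonneg fun _ _ => hF0 _))) (by positivity)
    _ = (L ^ 9)⁻¹ := by rw [← mul_inv, ← pow_add]

theorem tendsto_racahSummand {F : ℕ → ℝ} {L : ℝ} (hL : 0 < L) (hF : Tendsto F atTop (nhds L))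
    (A : Fin 4 → ℕ) (B : Fin 3 → ℕ) (M j : ℕ) (hFB : ∀ i, F (B i + j - M) ≠ 0) :
    Tendsto (fun k => racahSummand F (fun l => A l + 3 * k) (fun i => B i + 4 * k) (M + 4 * k - j))
      atTop (nhds (L / ∏ i, F (B i + j - M))) := by
  have hlim (u : ℕ → ℕ) (c : ℕ) (hu : ∀ k, k - c ≤ u k) :
      Tendsto (fun k => F (u k)) atTop (nhds L) :=
    hF.comp (tendsto_atTop_mono hu (tendsto_sub_atTop_nat c))
  have hsqrt : Tendsto (fun k => √((∏ i, ∏ l, F (B i + 4 * k - (A l + 3 * k))) /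
      ∏ l, F (A l + 3 * k + 1))) atTop (nhds (L ^ 4)) := by
    have hratio : √((∏ _i : Fin 3, ∏ _l : Fin 4, L) / ∏ _l : Fin 4, L) = L ^ 4 := by
      simp only [prod_const, card_univ, Fintype.card_fin]
      rw [Real.sqrt_eq_iff_mul_self_eq (by positivity) (by positivity)]
      field_simp
    rw [← hratio]
    exact ((tendsto_finsetProd _ fun i _ => tendsto_finsetProd _ fun l _ =>
      hlim _ (A l) fun k => by omega).div (tendsto_finsetProd _ fun l _ =>
      hlim _ 0 fun k => by omega) (prod_pos fun _ _ => hL).ne').sqrt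
  have hprodB : Tendsto (fun k => ∏ i, F (B i + 4 * k - (M + 4 * k - j))) atTop
      (nhds (∏ i, F (B i + j - M))) := by
    refine tendsto_const_nhds.congr' ?_
    filter_upwards [eventually_ge_atTop j] with k hk
    exact prod_congr rfl fun i _ => congrArg F (by omega)
  have hprodA : Tendsto (fun k => ∏ l, F (M + 4 * k - j - (A l + 3 * k))) atTop
      (nhds (L ^ 4)) := by
    simpa using tendsto_finsetProd univ fun l _ =>
      hlim (fun k => M + 4 * k - j - (A l + 3 * k)) (j + A l) fun k => by omega
  have hprodB_ne : ∏ i, F (B i + j - M) ≠ 0 := prod_ne_zero_iff.2 fun i _ => hFB i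
  have hlimit : L ^ 4 * (L / ((∏ i, F (B i + j - M)) * L ^ 4)) = L / ∏ i, F (B i + j - M) := by
    field_simp
  rw [← hlimit]
  exact hsqrt.mul ((hlim (fun k => M + 4 * k - j + 1) j fun k => by omega).div
    (hprodB.mul hprodA) (mul_ne_zero hprodB_ne (by positivity)))

/-- The limit of `t ^ (-4k)` times Racah's sum when the half-sums `A` and `B` are shifted by `3k`
and `4k`, summed over the distance `j` from the upper end of the summation range. -/
noncomputable def racahLimit (t : ℝ) (B : Fin 3 → ℕ) : ℝ :=
  let M := univ.inf' univ_nonempty B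
  ∑' j, (-1) ^ (M + j) * ((1 - t ^ 4) * t ^ racahExponent B M j *
    (qPochInf (t ^ 4) (t ^ 4) / ∏ i, qPoch (t ^ 4) (t ^ 4) (B i + j - M)))

theorem racahSum_add_mul (F : ℕ → ℝ) (hle : ∀ i j, A j ≤ B i) (k : ℕ) :
    racahSum F (fun j => A j + 3 * k) (fun i => B i + 4 * k) =
      ∑ j ∈ range (univ.inf' univ_nonempty B - univ.sup' univ_nonempty A + k + 1),
        (-1) ^ (univ.inf' univ_nonempty B + j) *
          racahSummand F (fun j => A j + 3 * k) (fun i => B i + 4 * k)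
            (univ.inf' univ_nonempty B + 4 * k - j) := by
  have hmM : univ.sup' univ_nonempty A ≤ univ.inf' univ_nonempty B :=
    sup'_le _ _ fun j _ => le_inf' _ _ fun i _ => hle i j
  have hinf : univ.inf' univ_nonempty (fun i => B i + 4 * k) =
      univ.inf' univ_nonempty B + 4 * k :=
    (apply_inf'_eq_inf'_comp univ_nonempty (· + 4 * k)
      fun _ _ => (min_add_add_right _ _ _).symm).symm
  rw [racahSum, ← sup'_add', hinf, sum_Icc_eq_sum_range_sub _ (by omega)]
  refine sum_congr (congrArg range (by omega)) fun j hj => ?_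
  have hj : j ≤ univ.inf' univ_nonempty B + 4 * k := by
    rw [mem_range] at hj
    omega
  congr 1
  exact neg_one_pow_congr (by grind)

theorem racahSum_qfact_add_mul {t : ℝ} (ht0 : 0 < t) (ht1 : t < 1)
    (hAB : ∑ j, A j = ∑ i, B i) (hle : ∀ i j, A j ≤ B i) (k : ℕ) :
    racahSum (qfact t) (fun j => A j + 3 * k) (fun i => B i + 4 * k) = t ^ (4 * k) *
      ∑ j ∈ range (univ.inf' univ_nonempty B - univ.sup' univ_nonempty A + k + 1),
        (-1) ^ (univ.inf' univ_nonempty B + j) *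
          ((1 - t ^ 4) * t ^ racahExponent B (univ.inf' univ_nonempty B) j *
            racahSummand (qPoch (t ^ 4) (t ^ 4)) (fun j => A j + 3 * k) (fun i => B i + 4 * k)
              (univ.inf' univ_nonempty B + 4 * k - j)) := by
  rw [racahSum_add_mul _ hle, mul_sum]
  have hmM : univ.sup' univ_nonempty A ≤ univ.inf' univ_nonempty B :=
    sup'_le _ _ fun j _ => le_inf' _ _ fun i _ => hle i j
  refine sum_congr rfl fun j hj => ?_
  have hA (l : Fin 4) : A l + 3 * k + j ≤ univ.inf' univ_nonempty B + 4 * k := by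
    have hAm : A l ≤ univ.sup' univ_nonempty A := le_sup' A (mem_univ l)
    rw [mem_range] at hj
    omega
  have hB (i : Fin 3) : univ.inf' univ_nonempty B + 4 * k ≤ B i + 4 * k :=
    Nat.add_le_add_right (inf'_le B (mem_univ i)) _
  have hsum : ∑ l, (A l + 3 * k) = ∑ i, (B i + 4 * k) := by
    simp only [sum_add_distrib, hAB, sum_const, card_univ, Fintype.card_fin, smul_eq_mul]
    ring
  rw [racahSummand_qfact ht0 ht1 hsum hA hB, racahExponent_add_mul, pow_add]
  ring

theorem tendsto_racahSum_qfact {t : ℝ} (ht0 : 0 < t) (ht1 : t < 1)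
    (hAB : ∑ j, A j = ∑ i, B i) (hle : ∀ i j, A j ≤ B i) :
    Tendsto (fun k => (t ^ (4 * k))⁻¹ *
        racahSum (qfact t) (fun j => A j + 3 * k) (fun i => B i + 4 * k))
      atTop (nhds (racahLimit t B)) := by
  have hq0 : 0 < t ^ 4 := by positivity
  have hq1 : t ^ 4 < 1 := pow_lt_one₀ ht0.le ht1 four_ne_zero
  have hL := qPochInf_pos hq1 hq0.le hq1
  have hqPoch (n : ℕ) : 0 < qPoch (t ^ 4) (t ^ 4) n := qPoch_pos hq1 hq0.le hq1.le n
  simp only [racahSum_qfact_add_mul ht0 ht1 hAB hle,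
    inv_mul_cancel_left₀ (pow_ne_zero _ ht0.ne')]
  refine tendsto_sum_range_of_dominated
    (bound := fun j => t ^ j * (qPochInf (t ^ 4) (t ^ 4) ^ 9)⁻¹)
    (tendsto_atTop_mono (fun k => by simp only [id_eq]; omega) tendsto_id)
    ((summable_geometric_of_lt_one ht0.le ht1).mul_right _)
    (fun j => ((tendsto_racahSummand hL (tendsto_qPoch _ (by rwa [abs_of_pos hq0])) A B _ j
      fun i => (hqPoch _).ne').const_mul _).const_mul _) fun k j _ => ?_
  have hcoeff_nonneg (n : ℕ) : 0 ≤ (1 - t ^ 4) * t ^ n :=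
    mul_nonneg (sub_pos.2 hq1).le (by positivity)
  have hcoeff : (1 - t ^ 4) * t ^ racahExponent B (univ.inf' univ_nonempty B) j ≤ t ^ j :=
    (mul_le_of_le_one_left (by positivity) (by linarith)).trans
      (pow_le_pow_of_le_one ht0.le ht1.le (le_racahExponent _ _ _))
  have hnonneg := racahSummand_nonneg fun n => (hqPoch n).le
  rw [norm_mul, norm_pow, norm_neg, norm_one, one_pow, one_mul,
    Real.norm_of_nonneg (mul_nonneg (hcoeff_nonneg _) (hnonneg _ _ _))]
  exact mul_le_mul hcoeff (racahSummand_le hL (qPochInf_le_qPoch hq0.le hq1 hq0.le hq1)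
    (qPoch_le_one hq0.le hq1 hq0.le hq1.le) _ _ _) (hnonneg _ _ _) (by positivity)

end Racah

section Tetrahedron

/-- The half-sums `A_1, …, A_4` of the labels at the four vertices. The divisions are exact for an
admissible labeling. -/
def vertexHalfSum (a b e c d f : ℕ) : Fin 4 → ℕ :=
  ![(a + d + e) / 2, (b + c + e) / 2, (a + b + f) / 2, (c + d + f) / 2]

/-- The half-sums `B_1, B_2, B_3` of the labels along the three quadrilaterals. The divisions are
exact for an admissible labeling. -/
def quadHalfSum (a b e c d f : ℕ) : Fin 3 → ℕ :=
  ![(a + b + c + d) / 2, (a + c + e + f) / 2, (b + d + e + f) / 2]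

/-- The product of the theta-values of the four vertex triples. -/
noncomputable def thetaProd (t : ℝ) (a b e c d f : ℕ) : ℝ :=
  qtheta t a d e * qtheta t b c e * qtheta t a b f * qtheta t c d f

/-- The tetrahedral coefficient divided by the square root of the absolute value of the product of
the theta-values. It is the unitary 6j-symbol up to a power of `√-1`. -/
noncomputable def normalizedTet (t : ℝ) (a b e c d f : ℕ) : ℝ :=
  Tet t a b e c d f / √|thetaProd t a b e c d f|

variable {t : ℝ} {a b e c d f : ℕ}

theorem vertexHalfSum_add_two_mul (a b e c d f k : ℕ) :
    vertexHalfSum (a + 2 * k) (b + 2 * k) (e + 2 * k) (c + 2 * k) (d + 2 * k) (f + 2 * k) =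
      fun j => vertexHalfSum a b e c d f j + 3 * k := by
  funext j
  fin_cases j <;> simp only [vertexHalfSum, Fin.reduceFinMk, Matrix.cons_val] <;> omega

theorem quadHalfSum_add_two_mul (a b e c d f k : ℕ) :
    quadHalfSum (a + 2 * k) (b + 2 * k) (e + 2 * k) (c + 2 * k) (d + 2 * k) (f + 2 * k) =
      fun i => quadHalfSum a b e c d f i + 4 * k := by
  funext i
  fin_cases i <;> simp only [quadHalfSum, Fin.reduceFinMk, Matrix.cons_val] <;> omega

theorem Admissible.add_two_mul (h : Admissible a b c) (k : ℕ) :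
    Admissible (a + 2 * k) (b + 2 * k) (c + 2 * k) := by
  obtain ⟨hev, h₁, h₂, h₃⟩ := h
  exact ⟨by grind, by omega, by omega, by omega⟩

theorem TetAdmissible.add_two_mul (h : TetAdmissible a b e c d f) (k : ℕ) :
    TetAdmissible (a + 2 * k) (b + 2 * k) (e + 2 * k) (c + 2 * k) (d + 2 * k) (f + 2 * k) :=
  ⟨h.1.add_two_mul k, h.2.1.add_two_mul k, h.2.2.1.add_two_mul k, h.2.2.2.add_two_mul k⟩

theorem TetAdmissible.sum_vertexHalfSum (h : TetAdmissible a b e c d f) :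
    ∑ j, vertexHalfSum a b e c d f j = a + b + c + d + e + f := by
  obtain ⟨⟨⟨x, hx⟩, -⟩, ⟨⟨y, hy⟩, -⟩, ⟨⟨z, hz⟩, -⟩, ⟨u, hu⟩, -⟩ := h
  simp only [vertexHalfSum, Fin.sum_univ_four, Matrix.cons_val]
  omega

theorem TetAdmissible.sum_quadHalfSum (h : TetAdmissible a b e c d f) :
    ∑ i, quadHalfSum a b e c d f i = a + b + c + d + e + f := by
  obtain ⟨⟨⟨x, hx⟩, -⟩, ⟨⟨y, hy⟩, -⟩, ⟨⟨z, hz⟩, -⟩, ⟨u, hu⟩, -⟩ := h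
  simp only [quadHalfSum, Fin.sum_univ_three, Matrix.cons_val]
  omega

theorem TetAdmissible.vertexHalfSum_le_quadHalfSum (h : TetAdmissible a b e c d f) (i : Fin 3)
    (j : Fin 4) : vertexHalfSum a b e c d f j ≤ quadHalfSum a b e c d f i := by
  obtain ⟨⟨-, h₁⟩, ⟨-, h₂⟩, ⟨-, h₃⟩, -, h₄⟩ := h
  fin_cases i <;> fin_cases j <;>
    simp only [vertexHalfSum, quadHalfSum, Fin.reduceFinMk, Matrix.cons_val] <;> omega

theorem qtheta_eq_strandProd (t : ℝ) (a b c : ℕ) :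
    qtheta t a b c = (-1) ^ ((a + b + c) / 2) *
      (qfact t ((a + b + c) / 2 + 1) * strandProd t a b c /
        (qfact t a * qfact t b * qfact t c)) := by
  rw [qtheta, strandProd]
  ring

theorem TetAdmissible.strandProd_mul (h : TetAdmissible a b e c d f) (t : ℝ) :
    strandProd t a d e * strandProd t b c e * strandProd t a b f * strandProd t c d f =
      ∏ i, ∏ j, qfact t (quadHalfSum a b e c d f i - vertexHalfSum a b e c d f j) := by
  obtain ⟨⟨⟨x, hx⟩, -⟩, ⟨⟨y, hy⟩, -⟩, ⟨⟨z, hz⟩, -⟩, ⟨u, hu⟩, -⟩ := h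
  have strandProd_eq {p q r x₁ x₂ x₃ : ℕ} (h₁ : p + q - r = 2 * x₁) (h₂ : q + r - p = 2 * x₂)
      (h₃ : p + r - q = 2 * x₃) : strandProd t p q r = qfact t x₁ * qfact t x₂ * qfact t x₃ := by
    simp only [strandProd, h₁, h₂, h₃, Nat.mul_div_cancel_left _ two_pos]
  let A := vertexHalfSum a b e c d f
  let B := quadHalfSum a b e c d f
  rw [strandProd_eq (x₁ := B 0 - A 1) (x₂ := B 2 - A 2) (x₃ := B 1 - A 3),
    strandProd_eq (x₁ := B 0 - A 0) (x₂ := B 1 - A 2) (x₃ := B 2 - A 3),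
    strandProd_eq (x₁ := B 0 - A 3) (x₂ := B 2 - A 0) (x₃ := B 1 - A 1),
    strandProd_eq (x₁ := B 0 - A 2) (x₂ := B 2 - A 1) (x₃ := B 1 - A 0)]
  · simp only [Fin.prod_univ_three, Fin.prod_univ_four]
    ring
  all_goals
    simp only [A, B, vertexHalfSum, quadHalfSum, Matrix.cons_val]
    omega

theorem TetAdmissible.thetaProd_eq (h : TetAdmissible a b e c d f) (t : ℝ) :
    thetaProd t a b e c d f = (-1) ^ (a + b + c + d + e + f) *
      ((∏ i, ∏ j, qfact t (quadHalfSum a b e c d f i - vertexHalfSum a b e c d f j)) *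
        (∏ j, qfact t (vertexHalfSum a b e c d f j + 1)) /
        (qfact t a * qfact t b * qfact t c * qfact t d * qfact t e * qfact t f) ^ 2) := by
  rw [thetaProd, ← h.strandProd_mul, ← h.sum_vertexHalfSum]
  simp only [qtheta_eq_strandProd, vertexHalfSum, Fin.prod_univ_four, Fin.sum_univ_four,
    Matrix.cons_val, pow_add]
  ring

theorem TetAdmissible.tet_eq (h : TetAdmissible a b e c d f) (t : ℝ) :
    Tet t a b e c d f =
      (∏ i, ∏ j, qfact t (quadHalfSum a b e c d f i - vertexHalfSum a b e c d f j)) /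
        (qfact t a * qfact t b * qfact t c * qfact t d * qfact t e * qfact t f) *
      ∑ s ∈ Icc (univ.sup' univ_nonempty (vertexHalfSum a b e c d f))
          (univ.inf' univ_nonempty (quadHalfSum a b e c d f)),
        (-1) ^ s * (qfact t (s + 1) / ((∏ i, qfact t (quadHalfSum a b e c d f i - s)) *
          ∏ j, qfact t (s - vertexHalfSum a b e c d f j))) := by
  rw [Tet, h.strandProd_mul]
  congr 1
  refine sum_congr rfl fun s _ => ?_
  simp only [vertexHalfSum, quadHalfSum, Fin.prod_univ_three, Fin.prod_univ_four, Matrix.cons_val]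
  ring

theorem TetAdmissible.abs_thetaProd (h : TetAdmissible a b e c d f) (ht0 : 0 < t) (ht1 : t < 1) :
    |thetaProd t a b e c d f| =
      (∏ i, ∏ j, qfact t (quadHalfSum a b e c d f i - vertexHalfSum a b e c d f j)) *
        (∏ j, qfact t (vertexHalfSum a b e c d f j + 1)) /
        (qfact t a * qfact t b * qfact t c * qfact t d * qfact t e * qfact t f) ^ 2 := by
  have hnonneg (n : ℕ) : 0 ≤ qfact t n := (qfact_pos ht0 ht1 n).le
  rw [h.thetaProd_eq, abs_mul, abs_neg_one_pow, one_mul]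
  exact abs_of_nonneg (div_nonneg (mul_nonneg
    (prod_nonneg fun _ _ => prod_nonneg fun _ _ => hnonneg _) (prod_nonneg fun _ _ => hnonneg _))
    (sq_nonneg _))

theorem TetAdmissible.thetaProd_eq_neg_one_pow_mul_abs (h : TetAdmissible a b e c d f)
    (ht0 : 0 < t) (ht1 : t < 1) :
    thetaProd t a b e c d f = (-1) ^ (a + b + c + d + e + f) * |thetaProd t a b e c d f| := by
  rw [h.abs_thetaProd ht0 ht1, h.thetaProd_eq]

theorem TetAdmissible.normalizedTet_eq_racahSum (h : TetAdmissible a b e c d f) (ht0 : 0 < t)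
    (ht1 : t < 1) : normalizedTet t a b e c d f =
      racahSum (qfact t) (vertexHalfSum a b e c d f) (quadHalfSum a b e c d f) := by
  have hpos := qfact_pos ht0 ht1
  set E := qfact t a * qfact t b * qfact t c * qfact t d * qfact t e * qfact t f with hE
  have hE0 : 0 < E := by simp [hE, hpos]
  set X := ∏ i, ∏ j, qfact t (quadHalfSum a b e c d f i - vertexHalfSum a b e c d f j)
  have hX0 : 0 < X := prod_pos fun _ _ => prod_pos fun _ _ => hpos _
  set Y := ∏ j, qfact t (vertexHalfSum a b e c d f j + 1)
  have hY0 : 0 < Y := prod_pos fun _ _ => hpos _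
  have hprefactor : X / E / √(X * Y / E ^ 2) = √(X / Y) := by
    rw [Real.sqrt_div (by positivity), Real.sqrt_sq hE0.le, Real.sqrt_mul hX0.le,
      Real.sqrt_div hX0.le]
    field_simp
    rw [Real.sq_sqrt hX0.le]
  rw [normalizedTet, h.tet_eq, h.abs_thetaProd ht0 ht1, mul_div_right_comm, hprefactor,
    racahSum, mul_sum]
  exact sum_congr rfl fun s _ => mul_left_comm _ _ _

theorem TetAdmissible.tendsto_normalizedTet (h : TetAdmissible a b e c d f) (ht0 : 0 < t)
    (ht1 : t < 1) :
    Tendsto (fun k => (t ^ (4 * k))⁻¹ * normalizedTet t (a + 2 * k) (b + 2 * k) (e + 2 * k)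
      (c + 2 * k) (d + 2 * k) (f + 2 * k)) atTop
      (nhds (racahLimit t (quadHalfSum a b e c d f))) := by
  simp only [(h.add_two_mul _).normalizedTet_eq_racahSum ht0 ht1, vertexHalfSum_add_two_mul,
    quadHalfSum_add_two_mul]
  exact tendsto_racahSum_qfact ht0 ht1 (h.sum_vertexHalfSum.trans h.sum_quadHalfSum.symm)
    h.vertexHalfSum_le_quadHalfSum

/- If the labels have an odd sum, then the product of the theta-values is negative, and the square
root in the definition of `sixj` takes the value `0`. -/
theorem TetAdmissible.sixj_eq_ite (h : TetAdmissible a b e c d f) (ht0 : 0 < t) (ht1 : t < 1) :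
    sixj t a b e c d f =
      if Even (a + b + c + d + e + f) then normalizedTet t a b e c d f else 0 := by
  have hsign := h.thetaProd_eq_neg_one_pow_mul_abs ht0 ht1
  rw [sixj, ← thetaProd]
  split_ifs with hev
  · rw [hev.neg_one_pow, one_mul] at hsign
    rw [normalizedTet, ← hsign]
  · rw [(Nat.not_even_iff_odd.1 hev).neg_one_pow, neg_one_mul] at hsign
    rw [Real.sqrt_eq_zero_of_nonpos (hsign.trans_le (neg_nonpos.2 (abs_nonneg _))), div_zero]

end Tetrahedron

/-- The sequence k ↦ t^{-4k}·{a+2k,b+2k,e+2k;c+2k,d+2k,f+2k}_u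
converges. -/
theorem stmt_10 (t : ℝ) (ht0 : 0 < t) (ht1 : t < 1) (a b e c d f : ℕ)
    (h : TetAdmissible a b e c d f) :
    ∃ L : ℝ, Filter.Tendsto
      (fun k => (t ^ (4 * k))⁻¹ *
        sixj t (a + 2 * k) (b + 2 * k) (e + 2 * k) (c + 2 * k) (d + 2 * k) (f + 2 * k))
      Filter.atTop (nhds L) := by
  have hsixj (k : ℕ) := (h.add_two_mul k).sixj_eq_ite ht0 ht1
  have hparity (k : ℕ) : Even (a + 2 * k + (b + 2 * k) + (c + 2 * k) + (d + 2 * k) +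
      (e + 2 * k) + (f + 2 * k)) ↔ Even (a + b + c + d + e + f) := by
    grind
  by_cases hev : Even (a + b + c + d + e + f)
  · simpa only [hsixj, hparity, if_pos hev] using ⟨_, h.tendsto_normalizedTet ht0 ht1⟩
  · simpa only [hsixj, hparity, if_neg hev, mul_zero] using ⟨0, tendsto_const_nhds⟩
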